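/- arXiv:1602.00823 — 2 statements merged into one kernel-verified Lean document; each statement's English description precedes it below -/
import Mathlib

section
/- Let F be a small category and O : F ⥤ Type a functor, with projection π : ∫O ⥤ F from the category of elements. Then: (a) the composite π ⋙ T_F, where T_F : F ⥤ Type is the constant functor at PUnit (the terminal object of F ⥤ Type), is a terminal object of the functor category ∫O ⥤ Type; and (b) the pointwise left Kan extension along π of this terminal functor π ⋙ T_F (equivalently, of the constant functor at PUnit on ∫O) is naturally isomorphic to O. -/
/-!
Terminality holds objectwise: maps into `PUnit` are unique.  For the Kan extension, the comma
category `π ↓ Y` has as objects the triples `(X, a, g : X ⟶ Y)`, and each such object has a unique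
morphism lying over `g` to `(Y, O(g)(a), 𝟙)`.  Hence the colimit over `π ↓ Y` of the constant functor
at a point, that is, the set of connected components of `π ↓ Y`, is `O Y`, via
`(X, a, g) ↦ O(g)(a)`.  This is `elementsUnitIsPointwise`: `O`, with its tautological
transformation `elementsUnit`, is a pointwise left Kan extension, and uniqueness of left Kan
extensions gives the isomorphism.
-/

open CategoryTheory Limits

/-- The tautological transformation from the constant functor at `PUnit` on `∫O` to `π ⋙ O`,
whose component at `(X, a)` picks out `a : O X`. -/
def elementsUnit {F : Type u} [SmallCategory F] (O : F ⥤ Type u) :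
    CategoryOfElements.π O ⋙ (Functor.const F).obj (PUnit : Type u) ⟶
      CategoryOfElements.π O ⋙ O where
  app p := TypeCat.ofHom fun _ => p.2
  naturality p q f := by
    ext
    exact f.2.symm

/-- `elementsUnit O` exhibits `O` as a pointwise left Kan extension along `π`.  A cocone over
`π ↓ Y` descends to `O Y` by sending `b` to the value of its leg at `(Y, b, 𝟙 Y)`. -/
def elementsUnitIsPointwise {F : Type u} [SmallCategory F] (O : F ⥤ Type u) :
    (Functor.LeftExtension.mk O (elementsUnit O)).IsPointwiseLeftKanExtension := fun Y =>
  { desc := fun s => TypeCat.ofHom fun b =>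
      s.ι.app (CostructuredArrow.mk (S := CategoryOfElements.π O) (Y := O.elementsMk Y b)
        (𝟙 Y)) PUnit.unit
    fac := fun s j => by
      ext ⟨⟩
      let k : j ⟶ CostructuredArrow.mk (S := CategoryOfElements.π O)
          (Y := O.elementsMk Y (O.map j.hom j.left.2)) (𝟙 Y) :=
        CostructuredArrow.homMk ⟨j.hom, rfl⟩ (Category.comp_id _)
      exact congrArg (fun t => t PUnit.unit) (s.w k)
    uniq := fun s m hm => by
      ext b
      have h := congrArg (fun t => t PUnit.unit)
        (hm (CostructuredArrow.mk (S := CategoryOfElements.π O) (Y := O.elementsMk Y b) (𝟙 Y)))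
      refine Eq.trans (congrArg m ?_) h
      exact (congrArg (fun t => t b) (O.map_id Y)).symm }

/-- Let `F` be a small category, `O : F ⥤ Type` a functor and
`π : ∫O ⥤ F` the projection from its category of elements.  Then (a) the pullback `π ⋙ T` of
the terminal object `T` of `F ⥤ Type` (the constant functor at `PUnit`) is a terminal object
of `∫O ⥤ Type`, and (b) the (pointwise) left Kan extension along `π` of this terminal functor
is naturally isomorphic to `O`. -/
theorem elements_pushforward_terminal {F : Type u} [SmallCategory F] (O : F ⥤ Type u) :
    Nonempty (IsTerminal
      (CategoryOfElements.π O ⋙ (Functor.const F).obj (PUnit : Type u))) ∧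
    Nonempty ((CategoryOfElements.π O).leftKanExtension
      (CategoryOfElements.π O ⋙ (Functor.const F).obj (PUnit : Type u)) ≅ O) := by
  refine ⟨⟨IsTerminal.ofUniqueHom (fun G => { app := fun _ => TypeCat.ofHom fun _ => PUnit.unit })
    fun G m => by ext; rfl⟩, ?_⟩
  have h := elementsUnitIsPointwise O
  have : O.IsLeftKanExtension (elementsUnit O) := h.isLeftKanExtension
  have := h.hasLeftKanExtension
  exact ⟨Functor.leftKanExtensionUnique _ (Functor.leftKanExtensionUnit _ _) O (elementsUnit O)⟩
end

section
/- Let F be a category, O : F ⥤ Type a functor, π : ∫O ⥤ F the projection from the category of elements, and X an object of F. Consider the comma category CostructuredArrow π X whose objects are pairs ((Y, b), φ) with φ : Y → X in F and b ∈ O(Y). Then the inclusion of the fiber of π over X — the discrete full subcategory on the objects ((X, a), 𝟙_X) for a ∈ O(X) — admits a left adjoint, sending ((Y, b), φ : Y → X) to ((X, O(φ)(b)), 𝟙_X); in particular this inclusion is a final (cofinal) functor, so colimits over CostructuredArrow π X may be computed as coproducts indexed by O(X). -/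
/-!
A morphism from `((Y, b), φ)` to `((X, a), 𝟙_X)` in `CostructuredArrow π X` is a morphism
`ψ : Y ⟶ X` with `ψ ≫ 𝟙_X = φ` and `O(ψ)(b) = a`. Hence there is at most one, namely `φ`, and it
exists exactly when `O(φ)(b) = a`, that is, when `((Y, b), φ) ↦ O(φ)(b)` has value `a`. This gives
the left adjoint, all of whose coherence conditions hold because the relevant hom-sets are
subsingletons. Right adjoints are final, so a colimit over `CostructuredArrow π X` agrees with the
colimit of the restriction to the discrete category on `O(X)`, which is a coproduct.
-/

open CategoryTheory Limits

variable {F : Type u} [Category.{v} F]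

/-- The inclusion of the fiber of the projection `π : ∫O ⥤ F` over `X`, i.e. of the discrete
category on the set `O(X)`, into the comma category `CostructuredArrow π X`: the element
`a ∈ O(X)` is sent to the object `((X, a), 𝟙_X)`. -/
def fiberInclusion (O : F ⥤ Type w) (X : F) :
    Discrete (O.obj X) ⥤ CostructuredArrow (CategoryOfElements.π O) X :=
  Discrete.functor fun a =>
    CostructuredArrow.mk (S := CategoryOfElements.π O) (Y := O.elementsMk X a) (𝟙 X)

/-- The functor `((Y, b), φ) ↦ O(φ)(b)` from the comma category to the fiber over `X`. -/
def fiberReflection (O : F ⥤ Type w) (X : F) :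
    CostructuredArrow (CategoryOfElements.π O) X ⥤ Discrete (O.obj X) where
  obj Z := Discrete.mk (O.map Z.hom Z.left.2)
  map {Z W} f := Discrete.eqToHom (by
    have h : f.left.val ≫ W.hom = Z.hom := CostructuredArrow.w f
    calc O.map Z.hom Z.left.2 = O.map (f.left.val ≫ W.hom) Z.left.2 :=
          congrArg (fun φ : Z.left.1 ⟶ X => O.map φ Z.left.2) h.symm
      _ = O.map W.hom (O.map f.left.val Z.left.2) := O.map_comp_apply f.left.val W.hom Z.left.2
      _ = O.map W.hom W.left.2 :=
          congrArg (fun b : O.obj W.left.1 => O.map W.hom b) (CategoryOfElements.map_snd f.left))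

/-- An object of the fiber receives at most one morphism from any object: its underlying morphism
in `F` is forced to be the structure morphism of the source. -/
lemma subsingleton_hom_fiberInclusion (O : F ⥤ Type w) (X : F)
    (Z : CostructuredArrow (CategoryOfElements.π O) X) (A : Discrete (O.obj X)) :
    Subsingleton (Z ⟶ (fiberInclusion O X).obj A) := by
  have key (f : Z ⟶ (fiberInclusion O X).obj A) : f.left.val = Z.hom := by
    have h : f.left.val ≫ 𝟙 X = Z.hom := CostructuredArrow.w f
    exact (Category.comp_id _).symm.trans h
  refine ⟨fun f g => ?_⟩
  apply CostructuredArrow.hom_ext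
  apply CategoryOfElements.ext
  exact (key f).trans (key g).symm

/-- The functor `fiberReflection` is left adjoint to the inclusion of the fiber; the unit at
`((Y, b), φ)` is the morphism to `((X, O(φ)(b)), 𝟙_X)` given by `φ`. -/
def fiberAdjunction (O : F ⥤ Type w) (X : F) : fiberReflection O X ⊣ fiberInclusion O X where
  unit :=
    { app Z := CostructuredArrow.homMk
        (CategoryOfElements.homMk Z.left (O.elementsMk X (O.map Z.hom Z.left.2)) Z.hom rfl)
        (Category.comp_id _)
      naturality _ _ _ := (subsingleton_hom_fiberInclusion O X _ _).elim _ _ }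
  counit :=
    { app A := Discrete.eqToHom (show O.map (𝟙 X) A.as = A.as from O.map_id_apply X _)
      naturality _ _ _ := Subsingleton.elim _ _ }
  left_triangle_components _ := Subsingleton.elim _ _
  right_triangle_components _ := (subsingleton_hom_fiberInclusion O X _ _).elim _ _


/-- For `O : F ⥤ Type`, `π : ∫O ⥤ F` the projection and `X` an object of
`F`, the inclusion of the fiber of `π` over `X` into the comma category
`CostructuredArrow π X` admits a left adjoint, which sends `((Y, b), φ : Y → X)` to
`((X, O(φ)(b)), 𝟙_X)`; in particular the inclusion is a final functor, so that colimits over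
`CostructuredArrow π X` are computed as coproducts (sigma types) indexed by `O(X)`. -/
theorem fiberInclusion_leftAdjoint_final (O : F ⥤ Type w) (X : F) :
    ∃ L : CostructuredArrow (CategoryOfElements.π O) X ⥤ Discrete (O.obj X),
      (∀ Z : CostructuredArrow (CategoryOfElements.π O) X,
        L.obj Z = Discrete.mk (O.map Z.hom Z.left.2)) ∧
      Nonempty (L ⊣ fiberInclusion O X) ∧
      (fiberInclusion O X).Final ∧
      ∀ (G : CostructuredArrow (CategoryOfElements.π O) X ⥤ Type w) [HasColimit G],
        Nonempty (colimit G ≅ Σ a : O.obj X, G.obj ((fiberInclusion O X).obj ⟨a⟩)) := by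
  have hfinal : (fiberInclusion O X).Final :=
    Functor.final_of_adjunction (fiberAdjunction O X)
  refine ⟨fiberReflection O X, fun _ => rfl, ⟨fiberAdjunction O X⟩, hfinal, fun G _ => ?_⟩
  exact ⟨(Functor.Final.colimitIso (fiberInclusion O X) G).symm ≪≫
    HasColimit.isoOfNatIso Discrete.natIsoFunctor ≪≫ Types.coproductIso _⟩
end
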